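/- arXiv:1607.06051 — 2 statements merged into one kernel-verified Lean document; each statement's English description precedes it below -/
import Mathlib

section
/- Fix n ≥ 2 and let μ, μ′ ∈ ℝⁿ satisfy Σᵢ μᵢ = Σᵢ μ′ᵢ = 0. If P_μ(σ) = P_{μ′}(σ) for every permutation σ of {1,…,n}, then μ = μ′. (Identifiability of the Thurstone–Mosteller–Daniels model on the mean-zero parameter space.) -/
open MeasureTheory ProbabilityTheory

/-- The product measure `γ_μ` on `ℝⁿ` whose `i`-th coordinate distribution is the real
Gaussian `N(μᵢ, 1)`. -/
noncomputable def gaussProd {n : ℕ} (μ : Fin n → ℝ) : Measure (Fin n → ℝ) :=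
  Measure.pi fun i => gaussianReal (μ i) 1

/-- `P_μ(σ) = γ_μ({z : z_{σ(1)} > z_{σ(2)} > ⋯ > z_{σ(n)}})`, the probability that ranking the
coordinates of `z` in decreasing order yields the permutation `σ`. -/
noncomputable def rankProb {n : ℕ} (μ : Fin n → ℝ) (σ : Equiv.Perm (Fin n)) : ℝ :=
  (gaussProd μ {z | ∀ i j : Fin n, i < j → z (σ j) < z (σ i)}).toReal

/-!
Only differences of coordinates matter. The probability that coordinate `i` beats coordinate `j` is
the sum of the probabilities of the rankings placing `i` before `j`, because ties are null. Writing
`z = μ + ε` with a noise `ε` whose law does not depend on `μ`, the same probability is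
`P(εⱼ - εᵢ < μᵢ - μⱼ)`, a strictly increasing function of `μᵢ - μⱼ` as soon as the law of `εⱼ - εᵢ`
charges every nonempty open set. Hence the ranking probabilities determine all differences
`μᵢ - μⱼ`, and together with the sum these determine `μ`.
-/

section Ranking

variable {n : ℕ} {α : Type*}

lemma perm_eq_of_strictAnti_comp [PartialOrder α] {z : Fin n → α}
    {σ τ : Equiv.Perm (Fin n)} (hσ : StrictAnti (z ∘ σ)) (hτ : StrictAnti (z ∘ τ)) : σ = τ := by
  have hz : Function.Injective z := (Function.Injective.of_comp_iff' z σ.bijective).1 hσ.injective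
  exact Equiv.ext fun k => hz (congrFun (Tuple.unique_antitone hσ.antitone hτ.antitone) k)

lemma lt_iff_symm_lt_of_strictAnti_comp [Preorder α] {z : Fin n → α}
    {σ : Equiv.Perm (Fin n)} (hσ : StrictAnti (z ∘ σ)) (i j : Fin n) :
    z j < z i ↔ σ.symm i < σ.symm j := by
  simpa using hσ.lt_iff_gt (a := σ.symm j) (b := σ.symm i)

variable [LinearOrder α]

lemma exists_perm_strictAnti_comp {z : Fin n → α} (hz : Function.Injective z) :
    ∃ σ : Equiv.Perm (Fin n), StrictAnti (z ∘ σ) := by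
  let σ := Tuple.sort (OrderDual.toDual ∘ z)
  have hanti : Antitone (z ∘ σ) := Tuple.monotone_sort (OrderDual.toDual ∘ z)
  exact ⟨σ, hanti.strictAnti_of_injective (hz.comp σ.injective)⟩

lemma lt_iff_exists_perm_strictAnti_comp {z : Fin n → α} (hz : Function.Injective z)
    (i j : Fin n) :
    z j < z i ↔ ∃ σ : Equiv.Perm (Fin n), σ.symm i < σ.symm j ∧ StrictAnti (z ∘ σ) := by
  constructor
  · intro hji
    obtain ⟨σ, hσ⟩ := exists_perm_strictAnti_comp hz
    exact ⟨σ, (lt_iff_symm_lt_of_strictAnti_comp hσ i j).1 hji, hσ⟩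
  · rintro ⟨σ, hij, hσ⟩
    exact (lt_iff_symm_lt_of_strictAnti_comp hσ i j).2 hij

variable [TopologicalSpace α] [OrderClosedTopology α] [SecondCountableTopology α]
  [MeasurableSpace α] [OpensMeasurableSpace α] {Ω : Type*} [MeasurableSpace Ω]

lemma measurableSet_strictAnti_comp {X : Ω → Fin n → α} (hX : Measurable X)
    (σ : Equiv.Perm (Fin n)) : MeasurableSet {ω | StrictAnti (X ω ∘ σ)} := by
  simp only [StrictAnti, Set.ofPred_forall]
  exact .iInter fun a => .iInter fun b => .iInter fun _ =>
    measurableSet_lt (by fun_prop) (by fun_prop)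

lemma measureReal_lt_eq_sum_measureReal_strictAnti_comp {P : Measure Ω} [IsFiniteMeasure P]
    {X : Ω → Fin n → α} (hX : Measurable X) (hinj : ∀ᵐ ω ∂P, Function.Injective (X ω))
    (i j : Fin n) :
    P.real {ω | X ω j < X ω i} =
      ∑ σ : Equiv.Perm (Fin n) with σ.symm i < σ.symm j, P.real {ω | StrictAnti (X ω ∘ σ)} := by
  rw [← measureReal_biUnion_finset]
  · refine measureReal_congr (Filter.eventuallyEq_set.2 ?_)
    filter_upwards [hinj] with ω hω
    simpa using lt_iff_exists_perm_strictAnti_comp hω i j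
  · exact fun σ _ τ _ hne => Set.disjoint_left.2 fun ω hσ hτ =>
      hne (perm_eq_of_strictAnti_comp hσ hτ)
  · exact fun σ _ => measurableSet_strictAnti_comp hX σ

end Ranking

lemma strictMono_measureReal_Iio {α : Type*} [LinearOrder α] [DenselyOrdered α]
    [TopologicalSpace α] [OrderClosedTopology α] [MeasurableSpace α] [OpensMeasurableSpace α]
    (ρ : Measure α) [IsFiniteMeasure ρ] [ρ.IsOpenPosMeasure] :
    StrictMono fun x => ρ.real (Set.Iio x) := by
  intro a b hab
  have hpos : 0 < ρ.real (Set.Ioo a b) :=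
    ENNReal.toReal_pos (isOpen_Ioo.measure_pos ρ (Set.nonempty_Ioo.2 hab)).ne' (measure_ne_top _ _)
  have hdisj : Disjoint (Set.Iio a) (Set.Ioo a b) :=
    Set.disjoint_left.2 fun _ hx hx' => lt_asymm hx hx'.1
  calc ρ.real (Set.Iio a)
      < ρ.real (Set.Iio a) + ρ.real (Set.Ioo a b) := lt_add_of_pos_right _ hpos
    _ = ρ.real (Set.Iio a ∪ Set.Ioo a b) := (measureReal_union hdisj measurableSet_Ioo).symm
    _ ≤ ρ.real (Set.Iio b) :=
      measureReal_mono (Set.union_subset (Set.Iio_subset_Iio hab.le) Set.Ioo_subset_Iio_self)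

lemma eq_of_sub_eq_sub_of_sum_eq_sum {ι G : Type*} [Fintype ι] [AddCommGroup G]
    [IsAddTorsionFree G] {f g : ι → G} (hsub : ∀ i j, f i - f j = g i - g j)
    (hsum : ∑ i, f i = ∑ i, g i) : f = g := by
  ext i
  have : Nonempty ι := ⟨i⟩
  have h : ∑ j, (f i - f j) = ∑ j, (g i - g j) := Finset.sum_congr rfl fun j _ => hsub i j
  simp only [Finset.sum_sub_distrib, hsum, sub_left_inj, Finset.sum_const] at h
  exact nsmul_right_injective Finset.univ_nonempty.card_ne_zero h

section LocationModel

lemma ae_injective_add_of_nullSingletonClass_map_sub {ι : Type*} [Countable ι] {ν : Measure (ι → ℝ)}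
    (hnull : Pairwise fun i j => NullSingletonClass (ν.map fun ε => ε j - ε i)) (μ : ι → ℝ) :
    ∀ᵐ ε ∂ν, Function.Injective (μ + ε) := by
  have hne (i j : ι) (hij : i ≠ j) : ∀ᵐ ε ∂ν, ε j - ε i ≠ μ i - μ j := by
    have := hnull hij
    exact ae_of_ae_map (f := fun ε : ι → ℝ => ε j - ε i) (by fun_prop)
      (Measure.ae_ne _ (μ i - μ j))
  filter_upwards [ae_all_iff.2 fun i => ae_all_iff.2 fun j => ae_all_iff.2 (hne i j)]
    with ε hε i j hεij
  by_contra hij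
  simp only [Pi.add_apply] at hεij
  exact hε i j hij (by linarith)

lemma measureReal_add_lt_add_eq_map_sub {ι : Type*} (ν : Measure (ι → ℝ)) (μ : ι → ℝ) (i j : ι) :
    ν.real {ε | (μ + ε) j < (μ + ε) i} =
      (ν.map fun ε => ε j - ε i).real (Set.Iio (μ i - μ j)) := by
  rw [map_measureReal_apply (by fun_prop) measurableSet_Iio]
  congr 1
  ext ε
  simp only [Pi.add_apply, Set.mem_ofPred_eq, Set.mem_preimage, Set.mem_Iio]
  constructor <;> intro <;> linarith

variable {n : ℕ} {ν : Measure (Fin n → ℝ)} [IsFiniteMeasure ν] {μ μ' : Fin n → ℝ}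

lemma sub_eq_sub_of_measureReal_strictAnti_comp_eq
    (hnull : Pairwise fun i j => NullSingletonClass (ν.map fun ε => ε j - ε i))
    (hpos : Pairwise fun i j => (ν.map fun ε => ε j - ε i).IsOpenPosMeasure)
    (h : ∀ σ : Equiv.Perm (Fin n),
      ν.real {ε | StrictAnti ((μ + ε) ∘ σ)} = ν.real {ε | StrictAnti ((μ' + ε) ∘ σ)})
    (i j : Fin n) : μ i - μ j = μ' i - μ' j := by
  obtain rfl | hij := eq_or_ne i j
  · simp only [sub_self]
  have := hpos hij
  have hsum (θ : Fin n → ℝ) := measureReal_lt_eq_sum_measureReal_strictAnti_comp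
    (measurable_const_add θ) (ae_injective_add_of_nullSingletonClass_map_sub hnull θ) i j
  apply (strictMono_measureReal_Iio (ν.map fun ε => ε j - ε i)).injective
  simp only [← measureReal_add_lt_add_eq_map_sub, hsum, h]

theorem rankProb_identifiable_general
    (hnull : Pairwise fun i j => NullSingletonClass (ν.map fun ε => ε j - ε i))
    (hpos : Pairwise fun i j => (ν.map fun ε => ε j - ε i).IsOpenPosMeasure)
    (hsum : ∑ i, μ i = ∑ i, μ' i)
    (h : ∀ σ : Equiv.Perm (Fin n),
      ν.real {ε | StrictAnti ((μ + ε) ∘ σ)} = ν.real {ε | StrictAnti ((μ' + ε) ∘ σ)}) :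
    μ = μ' :=
  eq_of_sub_eq_sub_of_sum_eq_sum (sub_eq_sub_of_measureReal_strictAnti_comp_eq hnull hpos h) hsum

end LocationModel

section Gaussian

lemma isOpenPosMeasure_gaussianReal (m : ℝ) {v : NNReal} (hv : v ≠ 0) :
    (gaussianReal m v).IsOpenPosMeasure :=
  (gaussianReal_absolutelyContinuous' m hv).isOpenPosMeasure

lemma map_sub_eq_gaussianReal_of_indepFun {Ω : Type*} [MeasurableSpace Ω] {P : Measure Ω}
    {X Y : Ω → ℝ} {m₁ m₂ : ℝ} {v₁ v₂ : NNReal} (hXY : IndepFun X Y P)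
    (hX : P.map X = gaussianReal m₁ v₁) (hY : P.map Y = gaussianReal m₂ v₂) :
    P.map (X - Y) = gaussianReal (m₁ - m₂) (v₁ + v₂) := by
  have hYm : AEMeasurable Y P := aemeasurable_of_map_neZero (by rw [hY]; infer_instance)
  have hneg : P.map (-Y) = gaussianReal (-m₂) v₂ := by
    rw [← gaussianReal_map_neg, ← hY, AEMeasurable.map_map_of_aemeasurable (by fun_prop) hYm]
    rfl
  have hindep : IndepFun X (-Y) P := hXY.comp measurable_id measurable_neg
  rw [sub_eq_add_neg, sub_eq_add_neg]
  exact gaussianReal_add_gaussianReal_of_indepFun hindep hX hneg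

lemma pi_gaussianReal_map_sub {ι : Type*} [Fintype ι] (m : ι → ℝ) (v : ι → NNReal) {i j : ι}
    (hij : i ≠ j) :
    (Measure.pi fun k => gaussianReal (m k) (v k)).map (fun z => z i - z j) =
      gaussianReal (m i - m j) (v i + v j) := by
  have hindep : iIndepFun (fun k (z : ι → ℝ) => z k)
      (Measure.pi fun k => gaussianReal (m k) (v k)) :=
    iIndepFun_pi (X := fun _ => id) fun _ => aemeasurable_id
  exact map_sub_eq_gaussianReal_of_indepFun (hindep.indepFun hij)
    (measurePreserving_eval _ i).map_eq (measurePreserving_eval _ j).map_eq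

variable {n : ℕ}

instance isProbabilityMeasure_gaussProd (μ : Fin n → ℝ) : IsProbabilityMeasure (gaussProd μ) := by
  unfold gaussProd
  infer_instance

lemma gaussProd_map_sub (μ : Fin n → ℝ) {i j : Fin n} (hij : i ≠ j) :
    (gaussProd μ).map (fun z => z i - z j) = gaussianReal (μ i - μ j) 2 := by
  rw [← one_add_one_eq_two]
  exact pi_gaussianReal_map_sub μ 1 hij

lemma gaussProd_map_const_add (θ μ : Fin n → ℝ) :
    (gaussProd μ).map (θ + ·) = gaussProd (θ + μ) := by
  have hshift (i : Fin n) : (gaussianReal (μ i) 1).map (θ i + ·) = gaussianReal (θ i + μ i) 1 := by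
    rw [gaussianReal_map_const_add, add_comm]
  have (i : Fin n) : SigmaFinite ((gaussianReal (μ i) 1).map (θ i + ·)) := by
    rw [hshift]
    infer_instance
  calc (gaussProd μ).map (θ + ·)
      = Measure.pi fun i => (gaussianReal (μ i) 1).map (θ i + ·) :=
        Measure.pi_map_pi fun i => (measurable_const_add (θ i)).aemeasurable
    _ = gaussProd (θ + μ) := congrArg Measure.pi (funext hshift)

lemma rankProb_eq_measureReal_strictAnti_comp (μ : Fin n → ℝ) (σ : Equiv.Perm (Fin n)) :
    rankProb μ σ = (gaussProd 0).real {ε | StrictAnti ((μ + ε) ∘ σ)} := by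
  have hmap := map_measureReal_apply (μ := gaussProd 0) (measurable_const_add μ)
    (measurableSet_strictAnti_comp measurable_id σ)
  rwa [gaussProd_map_const_add, add_zero] at hmap

lemma pairwise_nullSingletonClass_gaussProd_map_sub (μ : Fin n → ℝ) :
    Pairwise fun i j => NullSingletonClass ((gaussProd μ).map fun z => z j - z i) := by
  intro i j hij
  rw [gaussProd_map_sub μ hij.symm]
  exact nullSingletonClass_gaussianReal two_ne_zero

lemma pairwise_isOpenPosMeasure_gaussProd_map_sub (μ : Fin n → ℝ) :
    Pairwise fun i j => ((gaussProd μ).map fun z => z j - z i).IsOpenPosMeasure := by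
  intro i j hij
  rw [gaussProd_map_sub μ hij.symm]
  exact isOpenPosMeasure_gaussianReal _ two_ne_zero

end Gaussian

/-- Fix `n ≥ 2` and mean-zero vectors `μ, μ′ ∈ ℝⁿ`. If `P_μ(σ) = P_{μ′}(σ)`
for every permutation `σ`, then `μ = μ′`: identifiability of the Thurstone–Mosteller–Daniels
model on the mean-zero parameter space. -/
theorem rankProb_identifiable (n : ℕ) (hn : 2 ≤ n) (μ μ' : Fin n → ℝ)
    (hμ : ∑ i, μ i = 0) (hμ' : ∑ i, μ' i = 0)
    (h : ∀ σ : Equiv.Perm (Fin n), rankProb μ σ = rankProb μ' σ) :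
    μ = μ' := by
  exact rankProb_identifiable_general (pairwise_nullSingletonClass_gaussProd_map_sub 0)
    (pairwise_isOpenPosMeasure_gaussProd_map_sub 0) (hμ.trans hμ'.symm)
    (by simpa only [rankProb_eq_measureReal_strictAnti_comp] using h)
end

section
/- Let N ≥ 1 be an integer and let π : ℝᴺ → [0,∞) be a probability density with respect to Lebesgue measure such that for almost every z ∈ ℝᴺ, the normalizing constant c(z) = ∫₀^∞ π(z/θ) θ^{−N−1} dθ satisfies 0 < c(z) < ∞. Then the Markov transition that, from state z, draws θ ∈ (0,∞) with density θ ↦ π(z/θ) θ^{−N−1} / c(z) and moves to z/θ leaves π invariant: for every Lebesgue-measurable set A ⊆ ℝᴺ, ∫_{ℝᴺ} π(z) · (1/c(z)) · ∫₀^∞ 1_A(z/θ) π(z/θ) θ^{−N−1} dθ dz = ∫_A π(y) dy. (Validity of the parameter-expanded data-augmentation scale-group move.) -/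
open MeasureTheory
open scoped ENNReal

/-- The normalizing constant `c(z) = ∫₀^∞ p(z/θ) θ^{−N−1} dθ` of the PX-DA scale move,
where `z/θ` is coordinatewise division and `p` plays the role of the target density `π`. -/
noncomputable def pxdaConst (N : ℕ) (p : (Fin N → ℝ) → ℝ) (z : Fin N → ℝ) : ℝ≥0∞ :=
  ∫⁻ θ in Set.Ioi (0 : ℝ),
    ENNReal.ofReal (p (fun i => z i / θ) * θ ^ (-(N : ℝ) - 1))

/-!
Scaling by `θ > 0` multiplies Lebesgue measure on `ℝᴺ` by `χ(θ) = θᴺ`, and `θ^{−N−1} dθ` is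
`χ(θ)⁻¹` times the Haar measure `dθ/θ`, so the move is an instance of a move along the orbits of a
unimodular group. For such a group, a density `f` and a test function `φ`, write
`c(z) = ∫ f(g⁻¹z) χ(g⁻¹) dg`. Tonelli and the substitution `z = gy` turn
`∫ a(z) ∫ b(g⁻¹z) χ(g⁻¹) dg dz` into `∫ b(y) ∫ a(gy) dg dy`. Take `a = f/c` and `b = φf`: since
`c(gy) = χ(g)⁻¹ c(y)`, the inner integral is `c(y)⁻¹ ∫ f(gy) χ(g) dg`, which is `1` by invariance
of `dg` under inversion.
-/

open scoped NNReal

section GroupMove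

/-- The orbit integral of `F` through `z`. The group move for a target density `f` sends the test
function `φ` to `orbitIntegral ν χ (φ * f) / orbitIntegral ν χ f`: from `z`, it draws `g` with
`ν`-density proportional to `f (g⁻¹ • z) * χ g⁻¹` and moves to `g⁻¹ • z`. -/
noncomputable def orbitIntegral {G X : Type*} [Group G] [MeasurableSpace G] [MulAction G X]
    (ν : Measure G) (χ : G →* ℝ≥0∞) (F : X → ℝ≥0∞) (z : X) : ℝ≥0∞ :=
  ∫⁻ g, F (g⁻¹ • z) * χ g⁻¹ ∂ν

/-- `μ` is relatively invariant with multiplier `χ`: translation by `g` scales it by `χ g`. Stated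
as a pushforward, so with the factor `χ g⁻¹`. -/
def IsRelativelyInvariant {G X : Type*} [Group G] [MulAction G X] [MeasurableSpace X]
    (χ : G →* ℝ≥0∞) (μ : Measure X) : Prop :=
  ∀ g : G, μ.map (g • ·) = χ g⁻¹ • μ

variable {G X : Type*} [Group G]

lemma char_mul_char_inv (χ : G →* ℝ≥0∞) (g : G) : χ g * χ g⁻¹ = 1 := by
  rw [← map_mul, mul_inv_cancel, map_one]

lemma char_inv (χ : G →* ℝ≥0∞) (g : G) : χ g⁻¹ = (χ g)⁻¹ :=
  ENNReal.eq_inv_of_mul_eq_one_left (by rw [← map_mul, inv_mul_cancel, map_one])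

lemma char_ne_zero (χ : G →* ℝ≥0∞) (g : G) : χ g ≠ 0 :=
  (ENNReal.isUnit_iff.1 ((Group.isUnit g).map χ)).1

lemma char_ne_top (χ : G →* ℝ≥0∞) (g : G) : χ g ≠ ∞ :=
  (ENNReal.isUnit_iff.1 ((Group.isUnit g).map χ)).2

variable [MulAction G X] {χ : G →* ℝ≥0∞} {F : X → ℝ≥0∞}

section RelativelyInvariant

variable [MeasurableSpace X] [MeasurableConstSMul G X] {μ : Measure X}

lemma IsRelativelyInvariant.lintegral_eq (hμ : IsRelativelyInvariant χ μ) (g : G)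
    (hF : Measurable F) : ∫⁻ z, F z ∂μ = χ g * ∫⁻ y, F (g • y) ∂μ := by
  rw [← lintegral_map hF (measurable_const_smul g), hμ, lintegral_smul_measure, smul_eq_mul,
    ← mul_assoc, char_mul_char_inv, one_mul]

lemma IsRelativelyInvariant.lintegral_mul_comp_inv_smul (hμ : IsRelativelyInvariant χ μ) (g : G)
    {a b : X → ℝ≥0∞} (ha : Measurable a) (hb : Measurable b) :
    ∫⁻ z, a z * (b (g⁻¹ • z) * χ g⁻¹) ∂μ = ∫⁻ y, b y * a (g • y) ∂μ := by
  rw [hμ.lintegral_eq g (by fun_prop), ← lintegral_const_mul' _ _ (char_ne_top χ g)]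
  refine lintegral_congr fun y => ?_
  calc
    _ = χ g * χ g⁻¹ * (b y * a (g • y)) := by rw [inv_smul_smul]; ring
    _ = b y * a (g • y) := by rw [char_mul_char_inv, one_mul]

end RelativelyInvariant

variable [MeasurableSpace G] {ν : Measure G}

lemma orbitIntegral_smul [MeasurableMul G] [ν.IsMulLeftInvariant] (h : G) (z : X) :
    orbitIntegral ν χ F (h • z) = χ h⁻¹ * orbitIntegral ν χ F z := by
  unfold orbitIntegral
  rw [← lintegral_mul_left_eq_self _ h, ← lintegral_const_mul' _ _ (char_ne_top χ _)]
  refine lintegral_congr fun g => ?_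
  rw [smul_smul, mul_inv_rev, inv_mul_cancel_right, map_mul]
  ring

lemma inv_orbitIntegral_smul [MeasurableMul G] [ν.IsMulLeftInvariant] (h : G) (z : X) :
    (orbitIntegral ν χ F (h • z))⁻¹ = χ h * (orbitIntegral ν χ F z)⁻¹ := by
  rw [orbitIntegral_smul, ENNReal.mul_inv (.inl (char_ne_zero χ _)) (.inl (char_ne_top χ _)),
    ← char_inv, inv_inv]

lemma lintegral_comp_smul_mul_char [MeasurableInv G] [ν.IsInvInvariant] (z : X) :
    ∫⁻ g, F (g • z) * χ g ∂ν = orbitIntegral ν χ F z :=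
  (lintegral_inv_eq_self fun g => F (g • z) * χ g).symm

variable [MeasurableSpace X] [MeasurableSMul₂ G X] {μ : Measure X}

lemma measurable_orbitIntegral [MeasurableInv G] [SFinite ν] (hχ : Measurable χ)
    (hF : Measurable F) : Measurable (orbitIntegral ν χ F) := by
  refine Measurable.lintegral_prod_right' (f := fun x : X × G => F (x.2⁻¹ • x.1) * χ x.2⁻¹) ?_
  fun_prop

lemma IsRelativelyInvariant.lintegral_mul_orbitIntegral [MeasurableInv G] [SFinite ν] [SFinite μ]
    (hμ : IsRelativelyInvariant χ μ) (hχ : Measurable χ) {a b : X → ℝ≥0∞} (ha : Measurable a)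
    (hb : Measurable b) :
    ∫⁻ z, a z * orbitIntegral ν χ b z ∂μ = ∫⁻ y, b y * ∫⁻ g, a (g • y) ∂ν ∂μ :=
  calc
    _ = ∫⁻ z, ∫⁻ g, a z * (b (g⁻¹ • z) * χ g⁻¹) ∂ν ∂μ :=
      lintegral_congr fun z => (lintegral_const_mul _ (by fun_prop)).symm
    _ = ∫⁻ g, ∫⁻ z, a z * (b (g⁻¹ • z) * χ g⁻¹) ∂μ ∂ν :=
      lintegral_lintegral_swap (by unfold Function.uncurry; fun_prop)
    _ = ∫⁻ g, ∫⁻ y, b y * a (g • y) ∂μ ∂ν :=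
      lintegral_congr fun g => hμ.lintegral_mul_comp_inv_smul g ha hb
    _ = ∫⁻ y, ∫⁻ g, b y * a (g • y) ∂ν ∂μ :=
      lintegral_lintegral_swap (by unfold Function.uncurry; fun_prop)
    _ = ∫⁻ y, b y * ∫⁻ g, a (g • y) ∂ν ∂μ :=
      lintegral_congr fun y => lintegral_const_mul _ (by fun_prop)

lemma lintegral_comp_smul_mul_orbitIntegral_inv [MeasurableMul G] [MeasurableInv G]
    [ν.IsMulLeftInvariant] [ν.IsInvInvariant] (hχ : Measurable χ) (hF : Measurable F) (z : X) :
    ∫⁻ g, F (g • z) * (orbitIntegral ν χ F (g • z))⁻¹ ∂ν =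
      orbitIntegral ν χ F z * (orbitIntegral ν χ F z)⁻¹ := by
  simp only [inv_orbitIntegral_smul, ← mul_assoc]
  rw [lintegral_mul_const _ (by fun_prop), lintegral_comp_smul_mul_char]

theorem IsRelativelyInvariant.lintegral_groupMove [MeasurableMul G] [MeasurableInv G] [SFinite ν]
    [ν.IsMulLeftInvariant] [ν.IsInvInvariant] [SFinite μ] (hμ : IsRelativelyInvariant χ μ)
    (hχ : Measurable χ) {f φ : X → ℝ≥0∞} (hf : Measurable f) (hφ : Measurable φ)
    (hc : ∀ᵐ z ∂μ, f z ≠ 0 → orbitIntegral ν χ f z ≠ 0 ∧ orbitIntegral ν χ f z ≠ ∞) :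
    ∫⁻ z, f z * (orbitIntegral ν χ f z)⁻¹ * orbitIntegral ν χ (fun y => φ y * f y) z ∂μ =
      ∫⁻ y, φ y * f y ∂μ := by
  rw [hμ.lintegral_mul_orbitIntegral hχ (hf.fun_mul (measurable_orbitIntegral hχ hf).fun_inv)
    (hφ.fun_mul hf)]
  refine lintegral_congr_ae (hc.mono fun y hy => ?_)
  simp only [lintegral_comp_smul_mul_orbitIntegral_inv hχ hf]
  rcases eq_or_ne (f y) 0 with hfy | hfy
  · simp only [hfy, mul_zero, zero_mul]
  · rw [ENNReal.mul_inv_cancel (hy hfy).1 (hy hfy).2, mul_one]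

end GroupMove

section UnitsMeasurability

variable {M : Type*} [MeasurableSpace M]

lemma measurable_units_val [Monoid M] : Measurable (Units.val : Mˣ → M) :=
  comap_measurable _

lemma measurable_units_iff [Monoid M] {α : Type*} [MeasurableSpace α] {f : α → Mˣ} :
    Measurable f ↔ Measurable fun a => (f a : M) :=
  measurable_comap_iff

instance instMeasurableMulUnits [Monoid M] [MeasurableMul M] : MeasurableMul Mˣ where
  measurable_const_mul u := measurable_units_iff.2 (measurable_units_val.const_mul (u : M))
  measurable_mul_const u := measurable_units_iff.2 (measurable_units_val.mul_const (u : M))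

instance instMeasurableInvUnits [GroupWithZero M] [MeasurableInv M] : MeasurableInv Mˣ where
  measurable_inv := measurable_units_iff.2 <| by
    simpa only [Units.val_inv_eq_inv_val] using! measurable_units_val.inv

instance instMeasurableSMul₂Units [Monoid M] {X : Type*} [MeasurableSpace X] [MulAction M X]
    [MeasurableSMul₂ M X] : MeasurableSMul₂ Mˣ X where
  measurable_smul := (measurable_units_val.comp measurable_fst).smul measurable_snd

end UnitsMeasurability

section PositiveReals

/-- The exponential as a parametrization of the multiplicative group of positive reals, which is
encoded as `ℝ≥0ˣ`. -/
noncomputable def expUnit (t : ℝ) : ℝ≥0ˣ :=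
  Units.mk0 ⟨Real.exp t, (Real.exp_pos t).le⟩ (NNReal.coe_ne_zero.1 (Real.exp_ne_zero t))

lemma coe_expUnit (t : ℝ) : ((expUnit t : ℝ≥0) : ℝ) = Real.exp t := rfl

lemma units_nnreal_pos (u : ℝ≥0ˣ) : 0 < ((u : ℝ≥0) : ℝ) :=
  NNReal.coe_pos.2 u.ne_zero.bot_lt

lemma units_nnreal_ext {u v : ℝ≥0ˣ} (h : ((u : ℝ≥0) : ℝ) = (v : ℝ≥0)) : u = v :=
  Units.ext (NNReal.coe_injective h)

lemma expUnit_add (s t : ℝ) : expUnit (s + t) = expUnit s * expUnit t :=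
  units_nnreal_ext (Real.exp_add s t)

lemma expUnit_neg (t : ℝ) : expUnit (-t) = (expUnit t)⁻¹ :=
  eq_inv_of_mul_eq_one_left <| units_nnreal_ext <| by
    rw [← expUnit_add, neg_add_cancel, coe_expUnit, Real.exp_zero]; rfl

lemma surjective_expUnit : Function.Surjective expUnit := fun u =>
  ⟨Real.log (u : ℝ≥0), units_nnreal_ext (Real.exp_log (units_nnreal_pos u))⟩

lemma measurable_expUnit : Measurable expUnit :=
  measurable_units_iff.2 (Real.measurable_exp.subtype_mk)

/-- The Haar measure `dθ / θ` of the multiplicative group of positive reals, encoded as the image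
of Lebesgue measure under the exponential. -/
noncomputable def posRealHaar : Measure ℝ≥0ˣ := volume.map expUnit

instance : SFinite posRealHaar := by unfold posRealHaar; infer_instance

instance : posRealHaar.IsMulLeftInvariant where
  map_mul_left_eq_self u := by
    obtain ⟨s, rfl⟩ := surjective_expUnit u
    have hcomm : (expUnit s * ·) ∘ expUnit = expUnit ∘ (s + ·) :=
      funext fun t => (expUnit_add s t).symm
    rw [posRealHaar, Measure.map_map (measurable_const_mul _) measurable_expUnit, hcomm,
      ← Measure.map_map measurable_expUnit (measurable_const_add s), map_add_left_eq_self]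

instance : posRealHaar.IsInvInvariant where
  inv_eq_self := by
    have hcomm : Inv.inv ∘ expUnit = expUnit ∘ Neg.neg := funext fun t => (expUnit_neg t).symm
    rw [Measure.inv_def, posRealHaar, Measure.map_map measurable_inv measurable_expUnit, hcomm,
      ← Measure.map_map measurable_expUnit measurable_neg, Measure.map_neg_eq_self]

lemma lintegral_Ioi_eq_lintegral_posRealHaar {k : ℝ → ℝ≥0∞} (hk : Measurable k) :
    ∫⁻ θ in Set.Ioi (0 : ℝ), k θ =
      ∫⁻ u, k (u : ℝ≥0) * ((u : ℝ≥0) : ℝ≥0∞) ∂posRealHaar := by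
  have hcoe : Measurable fun u : ℝ≥0ˣ => ((u : ℝ≥0) : ℝ) := measurable_units_val.coe_nnreal_real
  have hmeas : Measurable fun u : ℝ≥0ˣ => k (u : ℝ≥0) * ((u : ℝ≥0) : ℝ≥0∞) :=
    (hk.comp hcoe).mul measurable_units_val.coe_nnreal_ennreal
  rw [posRealHaar, lintegral_map hmeas measurable_expUnit,
    ← Real.range_exp, ← Set.image_univ, lintegral_image_eq_lintegral_abs_deriv_mul .univ
      (fun t _ => (Real.hasDerivAt_exp t).hasDerivWithinAt) Real.exp_injective.injOn k,
    setLIntegral_univ]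
  refine lintegral_congr fun t => ?_
  rw [Real.abs_exp, mul_comm, coe_expUnit, ← coe_expUnit t, ENNReal.ofReal_coe_nnreal]

/-- The multiplier `θ ↦ θ ^ n` by which scaling by `θ` changes volume in dimension `n`. -/
noncomputable def scaleMultiplier (n : ℕ) : ℝ≥0ˣ →* ℝ≥0∞ :=
  (powMonoidHom n).comp (ENNReal.ofNNRealHom.toMonoidHom.comp (Units.coeHom ℝ≥0))

lemma scaleMultiplier_apply (n : ℕ) (u : ℝ≥0ˣ) :
    scaleMultiplier n u = ((u : ℝ≥0) : ℝ≥0∞) ^ n := rfl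

lemma measurable_scaleMultiplier (n : ℕ) : Measurable (scaleMultiplier n) :=
  measurable_units_val.coe_nnreal_ennreal.pow_const n

lemma lintegral_Ioi_mul_rpow_eq_lintegral_posRealHaar (n : ℕ) {k : ℝ → ℝ≥0∞}
    (hk : Measurable k) :
    ∫⁻ θ in Set.Ioi (0 : ℝ), k θ * ENNReal.ofReal (θ ^ (-(n : ℝ) - 1)) =
      ∫⁻ u, k (u : ℝ≥0) * scaleMultiplier n u⁻¹ ∂posRealHaar := by
  rw [lintegral_Ioi_eq_lintegral_posRealHaar (by fun_prop)]
  refine lintegral_congr fun u => ?_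
  have hu : 0 < ((u : ℝ≥0) : ℝ) := units_nnreal_pos u
  have hpow : ((u : ℝ≥0) : ℝ) ^ (-(n : ℝ) - 1) * (u : ℝ≥0) = (((u : ℝ≥0) : ℝ) ^ n)⁻¹ := by
    rw [Real.rpow_sub_one hu.ne', div_mul_cancel₀ _ hu.ne', Real.rpow_neg hu.le, Real.rpow_natCast]
  rw [mul_assoc, char_inv, scaleMultiplier_apply, ← ENNReal.ofReal_coe_nnreal,
    ← ENNReal.ofReal_mul (by positivity), hpow, ENNReal.ofReal_inv_of_pos (by positivity),
    ENNReal.ofReal_pow hu.le]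

end PositiveReals

section ScaleMove

open Module (finrank)

variable {E : Type*} [NormedAddCommGroup E] [NormedSpace ℝ E] [MeasurableSpace E] [BorelSpace E]

lemma isRelativelyInvariant_scaleMultiplier [FiniteDimensional ℝ E] (μ : Measure E)
    [μ.IsAddHaarMeasure] :
    IsRelativelyInvariant (scaleMultiplier (finrank ℝ E)) μ := fun u => by
  have hu : 0 < ((u : ℝ≥0) : ℝ) := units_nnreal_pos u
  have hmap : μ.map (u • ·) = ENNReal.ofReal |(((u : ℝ≥0) : ℝ) ^ finrank ℝ E)⁻¹| • μ :=
    Measure.map_addHaar_smul μ hu.ne'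
  rw [hmap, char_inv, scaleMultiplier_apply, abs_of_pos (by positivity),
    ENNReal.ofReal_inv_of_pos (by positivity), ENNReal.ofReal_pow hu.le, ENNReal.ofReal_coe_nnreal]

/-- The orbit integral `∫₀^∞ F(z/θ) θ^{−n−1} dθ` of the scale group on a real vector space of
dimension `n`. -/
noncomputable def scaleIntegral {E : Type*} [AddCommGroup E] [Module ℝ E] (F : E → ℝ≥0∞) (z : E) :
    ℝ≥0∞ :=
  ∫⁻ θ in Set.Ioi (0 : ℝ), F (θ⁻¹ • z) * ENNReal.ofReal (θ ^ (-(finrank ℝ E : ℝ) - 1))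

lemma scaleIntegral_eq_orbitIntegral {F : E → ℝ≥0∞} (hF : Measurable F) :
    scaleIntegral F = orbitIntegral posRealHaar (scaleMultiplier (finrank ℝ E)) F := by
  ext z
  rw [scaleIntegral, lintegral_Ioi_mul_rpow_eq_lintegral_posRealHaar _
    (k := fun θ => F (θ⁻¹ • z)) (by fun_prop)]
  refine lintegral_congr fun u => ?_
  rw [Units.smul_def, NNReal.smul_def, Units.val_inv_eq_inv_val, NNReal.coe_inv]

theorem pxda_scale_move_invariance_general [FiniteDimensional ℝ E] (μ : Measure E)
    [μ.IsAddHaarMeasure] {f φ : E → ℝ≥0∞} (hf : Measurable f) (hφ : Measurable φ)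
    (hc : ∀ᵐ z ∂μ, f z ≠ 0 → scaleIntegral f z ≠ 0 ∧ scaleIntegral f z ≠ ∞) :
    ∫⁻ z, f z * (scaleIntegral f z)⁻¹ * scaleIntegral (fun y => φ y * f y) z ∂μ =
      ∫⁻ y, φ y * f y ∂μ := by
  rw [scaleIntegral_eq_orbitIntegral hf] at hc ⊢
  rw [scaleIntegral_eq_orbitIntegral (hφ.fun_mul hf)]
  exact (isRelativelyInvariant_scaleMultiplier μ).lintegral_groupMove
    (measurable_scaleMultiplier _) hf hφ hc

end ScaleMove

lemma lintegral_pxda_eq_scaleIntegral {N : ℕ} (p : (Fin N → ℝ) → ℝ) (φ : (Fin N → ℝ) → ℝ≥0∞)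
    (z : Fin N → ℝ) :
    ∫⁻ θ in Set.Ioi (0 : ℝ), φ (fun i => z i / θ) *
        ENNReal.ofReal (p (fun i => z i / θ) * θ ^ (-(N : ℝ) - 1)) =
      scaleIntegral (fun y => φ y * ENNReal.ofReal (p y)) z := by
  refine setLIntegral_congr_fun measurableSet_Ioi fun θ (hθ : 0 < θ) => ?_
  have hdiv : (fun i => z i / θ) = θ⁻¹ • z := funext fun i => div_eq_inv_mul _ _
  simp only [hdiv, Module.finrank_fin_fun]
  rw [ENNReal.ofReal_mul' (by positivity), mul_assoc]

lemma pxdaConst_eq_scaleIntegral {N : ℕ} (p : (Fin N → ℝ) → ℝ) (z : Fin N → ℝ) :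
    pxdaConst N p z = scaleIntegral (fun y => ENNReal.ofReal (p y)) z := by
  simpa only [Pi.one_apply, one_mul] using! lintegral_pxda_eq_scaleIntegral p 1 z

/-- Let `p : ℝᴺ → [0,∞)` be a probability density w.r.t. Lebesgue measure
such that for a.e. `z` the normalizing constant `c(z) = ∫₀^∞ p(z/θ) θ^{−N−1} dθ` satisfies
`0 < c(z) < ∞`. Then the Markov transition that, from `z`, draws `θ ∈ (0,∞)` with density
`θ ↦ p(z/θ) θ^{−N−1}/c(z)` and moves to `z/θ` leaves `p` invariant: for every measurable
`A ⊆ ℝᴺ`,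
`∫ p(z) (1/c(z)) ∫₀^∞ 1_A(z/θ) p(z/θ) θ^{−N−1} dθ dz = ∫_A p(y) dy`. -/
theorem pxda_scale_move_invariance (N : ℕ) (hN : 1 ≤ N)
    (p : (Fin N → ℝ) → ℝ) (hpmeas : Measurable p) (hpnonneg : ∀ z, 0 ≤ p z)
    (hpprob : ∫ z, p z = 1)
    (hc : ∀ᵐ z : Fin N → ℝ, 0 < pxdaConst N p z ∧ pxdaConst N p z < ∞)
    (A : Set (Fin N → ℝ)) (hA : MeasurableSet A) :
    ∫⁻ z : Fin N → ℝ,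
        ENNReal.ofReal (p z) * (pxdaConst N p z)⁻¹ *
          ∫⁻ θ in Set.Ioi (0 : ℝ),
            A.indicator (fun _ => (1 : ℝ≥0∞)) (fun i => z i / θ) *
              ENNReal.ofReal (p (fun i => z i / θ) * θ ^ (-(N : ℝ) - 1)) =
      ∫⁻ y in A, ENNReal.ofReal (p y) := by
  simp only [lintegral_pxda_eq_scaleIntegral, pxdaConst_eq_scaleIntegral] at hc ⊢
  rw [pxda_scale_move_invariance_general volume (by fun_prop) (measurable_const.indicator hA)
    (hc.mono fun z hz _ => ⟨hz.1.ne', hz.2.ne⟩), ← lintegral_indicator hA]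
  simp only [← A.indicator_mul_left (fun _ => 1) fun y => ENNReal.ofReal (p y), one_mul]
end
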